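/- Fix an integer n ≥ 1. Let 𝒮 be the set of biquadratic fields K = ℚ(√a, √b) ⊆ ℂ with a, b odd squarefree integers and [K:ℚ] = 4. Then the set of K ∈ 𝒮 with genus number 2ⁿ (i.e. with ω(|Δ_K|) = n + 2) has density zero in 𝒮: the ratio #{K ∈ 𝒮 : ω(|Δ_K|) = n + 2, |Δ_K| ≤ X} / #{K ∈ 𝒮 : |Δ_K| ≤ X} tends to 0 as X → ∞. -/

import Mathlib

open IntermediateField NumberField Filter
noncomputable section
open scoped Classical
def biquad (d₁ d₂ : ℤ) : IntermediateField ℚ ℂ :=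
  IntermediateField.adjoin ℚ {x : ℂ | x ^ 2 = (d₁ : ℂ) ∨ x ^ 2 = (d₂ : ℂ)}
def biquadFamily : Set (IntermediateField ℚ ℂ) :=
  {K | ∃ a b : ℤ, Odd a ∧ Odd b ∧ Squarefree a ∧ Squarefree b ∧
    Module.finrank ℚ K = 4 ∧ K = biquad a b}
def absDisc (K : IntermediateField ℚ ℂ) : ℕ :=
  if h : FiniteDimensional ℚ K then
    haveI := h
    haveI : NumberField K := ⟨⟩
    (NumberField.discr K).natAbs
  else 0
/-- The number of `K ∈ 𝒮` with genus number `2ⁿ` (i.e. `ω(|Δ_K|) = n + 2`) and `|Δ_K| ≤ X`. -/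
def countSn (n : ℕ) (X : ℝ) : ℕ :=
  Nat.card {K : IntermediateField ℚ ℂ // K ∈ biquadFamily ∧
    (absDisc K).primeFactors.card = n + 2 ∧ (absDisc K : ℝ) ≤ X}
def countS (X : ℝ) : ℕ :=
  Nat.card {K : IntermediateField ℚ ℂ // K ∈ biquadFamily ∧ (absDisc K : ℝ) ≤ X}

def Hd : Matrix (Fin 4) (Fin 4) ℤ := !![1,1,1,1;1,1,-1,-1;1,-1,1,-1;1,-1,-1,1]

lemma Hd_det : Hd.det ^ 2 = 256 := by
  unfold Hd
  simp [Matrix.det_succ_row_zero, Fin.sum_univ_succ, Fin.succAbove]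

lemma Hd_orth (j k : Fin 4) : ∑ i, Hd i j * Hd i k = if j = k then 4 else 0 := by
  fin_cases j <;> fin_cases k <;> simp [Hd, Fin.sum_univ_four]

lemma rat_int_of_sq (q : ℚ) (c N : ℤ) (hc : Squarefree c) (h : q ^ 2 * c = N) :
    ∃ k : ℤ, q = k := by
  have h1 : (q.num : ℚ) ^ 2 * c = N * (q.den : ℚ) ^ 2 := by
    have hd : (q.den : ℚ) ≠ 0 := by exact_mod_cast q.den_nz
    rw [← h]
    conv_rhs => rw [← Rat.num_div_den q]
    field_simp
    rw [Rat.num_div_den]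
  have h2 : q.num ^ 2 * c = N * (q.den : ℤ) ^ 2 := by exact_mod_cast h1
  have hcop : IsCoprime (q.num ^ 2) ((q.den : ℤ) ^ 2) := by
    apply IsCoprime.pow
    rw [Int.isCoprime_iff_gcd_eq_one]
    exact q.reduced
  have h3 : ((q.den : ℤ) ^ 2) ∣ c := hcop.symm.dvd_of_dvd_mul_left (Dvd.intro_left N h2.symm)
  have h4 := hc (q.den : ℤ) (by rwa [← sq])
  have h5 : q.den = 1 := by
    simpa using Int.isUnit_iff_natAbs_eq.1 h4
  exact ⟨q.num, ((Rat.den_eq_one_iff q).1 h5).symm⟩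

section core
variable {L : Type*} [Field L] [NumberField L]

lemma rat_int_of_integral {A : Type*} [Field A] [CharZero A] (q : ℚ) (h : IsIntegral ℤ (q : A)) :
    ∃ k : ℤ, q = k := by
  have h' : IsIntegral ℤ (algebraMap ℚ A q) := by simpa using h
  have := (isIntegral_algebraMap_iff (algebraMap ℚ A).injective).1 h'
  obtain ⟨k, hk⟩ := IsIntegrallyClosed.isIntegral_iff.1 this
  exact ⟨k, by simpa using hk.symm⟩

lemma core_discr (v : Fin 4 → L) (c : Fin 4 → ℤ)
    (hv : ∀ i, v i ^ 2 = (c i : L)) (e : Fin 4 ≃ (L →ₐ[ℚ] ℂ))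
    (he : ∀ i j, e i (v j) = Hd i j * e 0 (v j)) :
    Algebra.discr ℚ v = 256 * (∏ i, c i : ℤ) := by
  have h1 := Algebra.discr_eq_det_embeddingsMatrixReindex_pow_two ℚ ℂ v e
  have h2 : Algebra.embeddingsMatrixReindex ℚ ℂ v e =
      Matrix.diagonal (fun j => e 0 (v j)) * (Hd.map (Int.castRingHom ℂ)).transpose := by
    ext i j
    simp [Algebra.embeddingsMatrixReindex, Algebra.embeddingsMatrix, Matrix.diagonal_mul]
    rw [he]; ring
  rw [h2, Matrix.det_mul, Matrix.det_transpose, Matrix.det_diagonal, mul_pow, ← Finset.prod_pow] at h1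
  have h3 : ∀ j, e 0 (v j) ^ 2 = c j := fun j => by rw [← map_pow, hv]; simp
  simp only [h3] at h1
  have h4 : (Hd.map (Int.castRingHom ℂ)).det ^ 2 = 256 := by
    have := congrArg (Int.castRingHom ℂ) Hd_det
    rw [map_pow, RingHom.map_det] at this
    simpa using this
  rw [h4] at h1
  have h5 : ((Algebra.discr ℚ v : ℚ) : ℂ) = ((256 * (∏ i, c i : ℤ) : ℚ) : ℂ) := by
    rw [← eq_ratCast (algebraMap ℚ ℂ), h1]; push_cast; ring
  exact_mod_cast h5

lemma core_coord (v : Module.Basis (Fin 4) ℚ L) (c : Fin 4 → ℤ) (hc : ∀ i, Squarefree (c i))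
    (hv : ∀ i, v i ^ 2 = (c i : L)) (e : Fin 4 ≃ (L →ₐ[ℚ] ℂ))
    (he : ∀ i j, e i (v j) = Hd i j * e 0 (v j)) (x : L) (hx : IsIntegral ℤ x) (j : Fin 4) :
    ∃ k : ℤ, 4 * v.repr x j = k := by
  have h1 : ∀ i, e i x = ∑ k, (v.repr x k : ℂ) * (Hd i k * e 0 (v k)) := by
    intro i
    conv_lhs => rw [← v.sum_repr x]
    rw [map_sum]
    refine Finset.sum_congr rfl fun k _ => ?_
    rw [Algebra.smul_def, map_mul, he, AlgHom.commutes]; simp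
  have h2 : ∑ i, (Hd i j : ℂ) * e i x = ((4 * v.repr x j : ℚ) : ℂ) * e 0 (v j) := by
    simp only [h1, Finset.mul_sum]
    rw [Finset.sum_comm]
    have : ∀ k, ∑ i, (Hd i j : ℂ) * ((v.repr x k : ℂ) * (Hd i k * e 0 (v k))) =
        (v.repr x k : ℂ) * e 0 (v k) * ((if j = k then 4 else 0 : ℤ) : ℂ) := by
      intro k
      rw [← Hd_orth]; push_cast; rw [Finset.mul_sum]
      refine Finset.sum_congr rfl fun _ _ => by ring
    simp only [this]
    simp
    ring
  have h3 : IsIntegral ℤ (((4 * v.repr x j : ℚ) : ℂ) * e 0 (v j)) := by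
    rw [← h2]
    refine IsIntegral.sum _ fun i _ => IsIntegral.mul ?_ ?_
    · exact isIntegral_algebraMap (R := ℤ) (A := ℂ) (x := Hd i j)
    · exact hx.map ((e i).restrictScalars ℤ)
  have h4 := h3.pow 2
  have h5 : (((4 * v.repr x j : ℚ) : ℂ) * e 0 (v j)) ^ 2 = (((4 * v.repr x j) ^ 2 * c j : ℚ) : ℂ) := by
    rw [mul_pow, ← map_pow, hv]; simp
  rw [h5] at h4
  obtain ⟨N, hN⟩ := rat_int_of_integral _ h4
  exact rat_int_of_sq _ _ _ (hc j) hN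

lemma core (h4 : Module.finrank ℚ L = 4) (v : Fin 4 → L) (c : Fin 4 → ℤ)
    (hc : ∀ i, Squarefree (c i))
    (hv : ∀ i, v i ^ 2 = (c i : L)) (e : Fin 4 ≃ (L →ₐ[ℚ] ℂ))
    (he : ∀ i j, e i (v j) = Hd i j * e 0 (v j)) :
    (∃ D : ℤ, D ^ 2 * ∏ i, c i = 256 * discr L) ∧ |discr L| ≤ 256 * |∏ i, c i| := by
  have hd := core_discr v c hv e he
  have hne : ∏ i, c i ≠ 0 := Finset.prod_ne_zero_iff.2 fun i _ => (hc i).ne_zero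
  have hne' : Algebra.discr ℚ v ≠ 0 := by
    rw [hd]; exact mul_ne_zero (by norm_num) (by exact_mod_cast hne)
  have hli : LinearIndependent ℚ v := by
    by_contra h
    exact hne' (Algebra.discr_zero_of_not_linearIndependent ℚ h)
  let V : Module.Basis (Fin 4) ℚ L := basisOfLinearIndependentOfCardEqFinrank hli (by simp [h4])
  have hV : ⇑V = v := coe_basisOfLinearIndependentOfCardEqFinrank _ _
  let f : Module.Free.ChooseBasisIndex ℤ (𝓞 L) ≃ Fin 4 := (integralBasis L).indexEquiv V
  let W := (integralBasis L).reindex f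
  have hW : Algebra.discr ℚ W = discr L := by
    rw [coe_discr]
    show Algebra.discr ℚ ((integralBasis L).reindex f) = _
    rw [Module.Basis.coe_reindex, Algebra.discr_reindex]
  have hWint : ∀ i, IsIntegral ℤ (W i) := by
    intro i
    simp only [W, Module.Basis.reindex_apply, integralBasis_apply]
    exact RingOfIntegers.isIntegral_coe _
  have hvint : ∀ i, IsIntegral ℤ (v i) := by
    intro i
    refine IsIntegral.of_pow (n := 2) (by norm_num) ?_
    rw [hv]
    exact isIntegral_algebraMap (R := ℤ) (A := L) (x := c i)
  constructor
  · have hQ : ∀ i j, ∃ k : ℤ, 4 * V.repr (W j) i = k := fun i j =>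
      core_coord V c hc (by rwa [hV]) e (by rwa [hV]) _ (hWint j) i
    choose Q hQ using hQ
    let Qm : Matrix (Fin 4) (Fin 4) ℤ := Matrix.of Q
    have key := Algebra.discr_of_matrix_vecMul (A := ℚ) V (V.toMatrix W)
    have key2 : Algebra.discr ℚ W = (V.toMatrix W).det ^ 2 * Algebra.discr ℚ V := by
      rw [← key, Module.Basis.toMatrix_map_vecMul]
    have h5 : (4 : ℚ) • V.toMatrix W = Qm.map (Int.castRingHom ℚ) := by
      ext i j
      simp [Qm, Module.Basis.toMatrix_apply, ← hQ]
    have h6 := congrArg Matrix.det h5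
    rw [Matrix.det_smul] at h6
    have h7 : (Qm.map (Int.castRingHom ℚ)).det = (Qm.det : ℚ) := by
      have := RingHom.map_det (Int.castRingHom ℚ) Qm
      simpa using this.symm
    rw [h7] at h6
    refine ⟨Qm.det, ?_⟩
    rw [hW, hV, hd] at key2
    have : ((Qm.det ^ 2 * ∏ i, c i : ℤ) : ℚ) = ((256 * discr L : ℤ) : ℚ) := by
      rw [Int.cast_mul, Int.cast_pow, Int.cast_mul, key2, ← h6, Fintype.card_fin]
      push_cast
      ring
    exact_mod_cast this
  · have hP : ∀ i j, ∃ k : ℤ, W.repr (v j) i = k := by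
      intro i j
      have := integralBasis_repr_apply L ⟨v j, hvint j⟩ (f.symm i)
      refine ⟨(RingOfIntegers.basis L).repr ⟨v j, hvint j⟩ (f.symm i), ?_⟩
      rw [Module.Basis.repr_reindex_apply]
      exact this
    choose P hP using hP
    let Pm : Matrix (Fin 4) (Fin 4) ℤ := Matrix.of P
    have key := Algebra.discr_of_matrix_vecMul (A := ℚ) W (W.toMatrix v)
    have key2 : Algebra.discr ℚ v = (W.toMatrix v).det ^ 2 * Algebra.discr ℚ W := by
      rw [← key, Module.Basis.toMatrix_map_vecMul]
    have h5 : W.toMatrix v = Pm.map (Int.castRingHom ℚ) := by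
      ext i j
      simp [Pm, Module.Basis.toMatrix_apply, ← hP]
    have h7 : (Pm.map (Int.castRingHom ℚ)).det = (Pm.det : ℚ) := by
      have := RingHom.map_det (Int.castRingHom ℚ) Pm
      simpa using this.symm
    rw [h5, h7, hW, hd] at key2
    have h8 : 256 * ∏ i, c i = Pm.det ^ 2 * discr L := by exact_mod_cast key2
    have h9 : (256 : ℤ) * |∏ i, c i| = Pm.det ^ 2 * |discr L| := by
      rw [← abs_of_nonneg (sq_nonneg Pm.det), ← abs_mul, ← h8, abs_mul]; norm_num
    rw [h9]
    have h10 : Pm.det ≠ 0 := by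
      intro h; rw [h] at h8; simp at h8
      exact hne h8
    have : 1 ≤ Pm.det ^ 2 := Int.add_one_le_iff.2 (by have := sq_pos_of_ne_zero h10; simpa using this)
    nlinarith [abs_nonneg (discr L)]
end core

section bq
variable {a b : ℤ} {ra rb : ℂ}

lemma biquad_eq (ha : ra ^ 2 = a) (hb : rb ^ 2 = b) : biquad a b = adjoin ℚ {ra, rb} := by
  unfold biquad
  apply le_antisymm
  · rw [adjoin_le_iff]
    have h1 : ra ∈ adjoin ℚ {ra, rb} := subset_adjoin _ _ (by simp)
    have h2 : rb ∈ adjoin ℚ {ra, rb} := subset_adjoin _ _ (by simp)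
    rintro x (hx | hx)
    · rw [← ha, sq_eq_sq_iff_eq_or_eq_neg] at hx
      rcases hx with rfl | rfl
      · exact h1
      · exact neg_mem h1
    · rw [← hb, sq_eq_sq_iff_eq_or_eq_neg] at hx
      rcases hx with rfl | rfl
      · exact h2
      · exact neg_mem h2
  · apply adjoin.mono
    rintro x (rfl | rfl)
    · exact Or.inl ha
    · exact Or.inr hb

lemma biquad_fd (a b : ℤ) : FiniteDimensional ℚ (biquad a b) := by
  obtain ⟨ra, ha⟩ := IsAlgClosed.exists_pow_nat_eq (a : ℂ) (n := 2) (by norm_num)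
  obtain ⟨rb, hb⟩ := IsAlgClosed.exists_pow_nat_eq (b : ℂ) (n := 2) (by norm_num)
  rw [biquad_eq ha hb]
  apply finiteDimensional_adjoin_pair
  · refine IsIntegral.of_pow (n := 2) (by norm_num) ?_
    rw [ha]; simpa using isIntegral_algebraMap (R := ℚ) (A := ℂ) (x := (a : ℚ))
  · refine IsIntegral.of_pow (n := 2) (by norm_num) ?_
    rw [hb]; simpa using isIntegral_algebraMap (R := ℚ) (A := ℂ) (x := (b : ℚ))

lemma mem_left (ha : ra ^ 2 = a) : ra ∈ biquad a b := subset_adjoin _ _ (Or.inl ha)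
lemma mem_right (hb : rb ^ 2 = b) : rb ∈ biquad a b := subset_adjoin _ _ (Or.inr hb)

def sgnMap (ha : ra ^ 2 = a) (hb : rb ^ 2 = b) (f : biquad a b →ₐ[ℚ] ℂ) : Bool × Bool :=
  (decide (f ⟨ra, mem_left ha⟩ = ra), decide (f ⟨rb, mem_right hb⟩ = rb))

lemma emb_left (ha : ra ^ 2 = a) (f : biquad a b →ₐ[ℚ] ℂ) :
    f ⟨ra, mem_left ha⟩ = ra ∨ f ⟨ra, mem_left ha⟩ = - ra := by
  rw [← sq_eq_sq_iff_eq_or_eq_neg, ← map_pow]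
  have : (⟨ra, mem_left ha⟩ : biquad a b) ^ 2 = (a : biquad a b) := by
    ext; simp [ha]
  rw [this, ha]; simp

lemma emb_right (hb : rb ^ 2 = b) (f : biquad a b →ₐ[ℚ] ℂ) :
    f ⟨rb, mem_right hb⟩ = rb ∨ f ⟨rb, mem_right hb⟩ = - rb := by
  rw [← sq_eq_sq_iff_eq_or_eq_neg, ← map_pow]
  have : (⟨rb, mem_right hb⟩ : biquad a b) ^ 2 = (b : biquad a b) := by
    ext; simp [hb]
  rw [this, hb]; simp

lemma sgnMap_inj (ha : ra ^ 2 = a) (hb : rb ^ 2 = b) : Function.Injective (sgnMap ha hb) := by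
  intro f g h
  simp only [sgnMap, Prod.mk.injEq, decide_eq_decide] at h
  refine algHom_ext_of_eq_adjoin ℚ (biquad_eq ha hb) ?_
  rintro x (rfl | rfl)
  · have h1 := emb_left ha f
    have h2 := emb_left ha g
    by_cases hx : f ⟨x, mem_left ha⟩ = x
    · exact hx.trans (h.1.1 hx).symm
    · exact (h1.resolve_left hx).trans (h2.resolve_left (fun h' => hx (h.1.2 h'))).symm
  · have h1 := emb_right hb f
    have h2 := emb_right hb g
    by_cases hx : f ⟨x, mem_right hb⟩ = x
    · exact hx.trans (h.2.1 hx).symm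
    · exact (h1.resolve_left hx).trans (h2.resolve_left (fun h' => hx (h.2.2 h'))).symm

lemma biquad_finrank_le (a b : ℤ) : Module.finrank ℚ (biquad a b) ≤ 4 := by
  obtain ⟨ra, ha⟩ := IsAlgClosed.exists_pow_nat_eq (a : ℂ) (n := 2) (by norm_num)
  obtain ⟨rb, hb⟩ := IsAlgClosed.exists_pow_nat_eq (b : ℂ) (n := 2) (by norm_num)
  have := biquad_fd a b
  rw [← AlgHom.card ℚ (biquad a b) ℂ]
  exact Fintype.card_le_of_injective _ (sgnMap_inj ha hb)

def code : Fin 4 ≃ Bool × Bool :=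
  Equiv.ofBijective ![(true, true), (true, false), (false, true), (false, false)] (by decide)

lemma biquad_disc (hsa : Squarefree a) (hsb : Squarefree b)
    (h4 : Module.finrank ℚ (biquad a b) = 4) :
    (∃ D : ℕ, D ^ 2 * (Int.lcm a b) ^ 2 = 256 * absDisc (biquad a b)) ∧
      absDisc (biquad a b) ≤ 256 * (Int.lcm a b) ^ 2 := by
  obtain ⟨ra, ha⟩ := IsAlgClosed.exists_pow_nat_eq (a : ℂ) (n := 2) (by norm_num)
  obtain ⟨rb, hb⟩ := IsAlgClosed.exists_pow_nat_eq (b : ℂ) (n := 2) (by norm_num)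
  have hfd := biquad_fd a b
  have : NumberField (biquad a b) := ⟨⟩
  have ha0 := hsa.ne_zero
  have hb0 := hsb.ne_zero
  have hbij : Function.Bijective (sgnMap ha hb) := by
    rw [Fintype.bijective_iff_injective_and_card]
    refine ⟨sgnMap_inj ha hb, ?_⟩
    rw [AlgHom.card ℚ (biquad a b) ℂ, h4]; rfl
  let E := Equiv.ofBijective _ hbij
  let e : Fin 4 ≃ (biquad a b →ₐ[ℚ] ℂ) := code.trans E.symm
  have he0 : ∀ i, sgnMap ha hb (e i) = code i := fun i => E.apply_symm_apply (code i)
  set A : biquad a b := ⟨ra, mem_left ha⟩ with hA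
  set B : biquad a b := ⟨rb, mem_right hb⟩ with hB
  have hA2 : A ^ 2 = (a : biquad a b) := by ext; simp [hA, ha]
  have hB2 : B ^ 2 = (b : biquad a b) := by ext; simp [hB, hb]
  have heA : ∀ i, e i A = Hd i 1 * ra := by
    intro i
    have h1 := congrArg Prod.fst (he0 i)
    simp only [sgnMap] at h1
    have h2 := emb_left ha (e i)
    fin_cases i <;> simp [code] at h1 <;> simp [Hd] <;> first | exact h1 | exact h2.resolve_left h1
  have heB : ∀ i, e i B = Hd i 2 * rb := by
    intro i
    have h1 := congrArg Prod.snd (he0 i)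
    simp only [sgnMap] at h1
    have h2 := emb_right hb (e i)
    fin_cases i <;> simp [code] at h1 <;> simp [Hd] <;> first | exact h1 | exact h2.resolve_left h1
  obtain ⟨g, a', b', hg0, hrel, rfl, rfl⟩ : ∃ g a' b' : ℤ, g ≠ 0 ∧ IsCoprime a' b' ∧
      a = a' * g ∧ b = b' * g := by
    have hg : 0 < Int.gcd a b := Int.gcd_pos_of_ne_zero_left _ ha0
    obtain ⟨a', b', h1, h2, h3⟩ := Int.exists_gcd_one hg
    exact ⟨Int.gcd a b, a', b', by positivity, Int.isCoprime_iff_gcd_eq_one.2 h1, h2, h3⟩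
  have hlcm : ((Int.lcm (a' * g) (b' * g) : ℕ) : ℤ) ^ 2 = (a' * b' * g) ^ 2 := by
    rw [Int.lcm_mul_right]
    have : Int.lcm a' b' = (a' * b').natAbs := by
      have := Int.gcd_mul_lcm a' b'
      rw [Int.isCoprime_iff_gcd_eq_one.1 hrel, one_mul] at this
      rw [this, Int.natAbs_mul]
    rw [this]
    push_cast
    rw [← abs_mul, sq_abs]
  have hsq3 : Squarefree (a' * b') := by
    rw [squarefree_mul_iff]
    exact ⟨hrel.isRelPrime, hsa.of_mul_left, hsb.of_mul_left⟩
  have hcore := core h4 ![1, A, B, A * B / g] ![1, a' * g, b' * g, a' * b'] 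
    (by intro i; fin_cases i; exacts [squarefree_one, hsa, hsb, hsq3])
    (by
      intro i; fin_cases i
      · simp
      · exact hA2
      · exact hB2
      · have : (g : biquad (a' * g) (b' * g)) ≠ 0 := by exact_mod_cast hg0
        simp [div_pow, mul_pow, hA2, hB2]
        field_simp) e
    (by
      intro i j
      have h1 := heA i
      have h2 := heA 0
      have h3 := heB i
      have h4 := heB 0
      fin_cases j
      · fin_cases i <;> simp [Hd]
      · simp [h1, h2]; left; simp [Hd]
      · simp [h3, h4]; left; simp [Hd]
      · simp [h1, h2, h3, h4]
        fin_cases i <;> simp [Hd, neg_div])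
  have hprod : ∏ i, (![1, a' * g, b' * g, a' * b'] : Fin 4 → ℤ) i =
      ((Int.lcm (a' * g) (b' * g) : ℕ) : ℤ) ^ 2 := by
    rw [hlcm]; simp [Fin.prod_univ_four]; ring
  rw [hprod] at hcore
  have hdisc : absDisc (biquad (a' * g) (b' * g)) = (discr (biquad (a' * g) (b' * g))).natAbs := by
    simp [absDisc, hfd]
  rw [hdisc]
  obtain ⟨⟨D, hD⟩, hle⟩ := hcore
  constructor
  · refine ⟨D.natAbs, ?_⟩
    have := congrArg Int.natAbs hD
    simpa [Int.natAbs_mul, Int.natAbs_pow] using this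
  · zify
    simpa using hle
end bq

def Dset (m : ℕ) : Finset ℤ :=
  (m.primeFactors.powerset ×ˢ ({1, -1} : Finset ℤ)).image (fun s => s.2 * ((∏ p ∈ s.1, p : ℕ) : ℤ))

lemma Dset_card (m : ℕ) : (Dset m).card ≤ 2 ^ (m.primeFactors.card + 1) := by
  refine Finset.card_image_le.trans ?_
  rw [Finset.card_product, Finset.card_powerset, pow_succ]
  exact Nat.mul_le_mul_left _ Finset.card_le_two

lemma mem_Dset {m : ℕ} (hm : m ≠ 0) {a : ℤ} (ha : Squarefree a) (h : a.natAbs ∣ m) : a ∈ Dset m := by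
  unfold Dset
  rw [Finset.mem_image]
  refine ⟨(a.natAbs.primeFactors, a.sign), ?_, ?_⟩
  · rw [Finset.mem_product]
    refine ⟨Finset.mem_powerset.2 (Nat.primeFactors_mono h hm), ?_⟩
    have := ha.ne_zero
    rcases lt_or_gt_of_ne this with h | h
    · simp [Int.sign_eq_neg_one_of_neg h]
    · simp [Int.sign_eq_one_of_pos h]
  · simp only
    rw [Nat.prod_primeFactors_of_squarefree (Int.squarefree_natAbs.2 ha), Int.sign_mul_natAbs]

lemma countSn_le (n : ℕ) (X : ℝ) (hX : 0 ≤ X) :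
    (countSn n X : ℝ) ≤ (16 * (2 ^ (n + 3)) ^ 2) * √X := by
  set N := ⌊16 * √X⌋₊ with hN
  let M := (Finset.Icc 1 N).filter (fun m => m.primeFactors.card ≤ n + 2)
  let T : Finset (IntermediateField ℚ ℂ) :=
    M.biUnion (fun m => (Dset m ×ˢ Dset m).image (fun s => biquad s.1 s.2))
  have hsub : {K : IntermediateField ℚ ℂ | K ∈ biquadFamily ∧
    (absDisc K).primeFactors.card = n + 2 ∧ (absDisc K : ℝ) ≤ X} ⊆ (T : Set _) := by
    rintro K ⟨⟨a, b, hoa, hob, hsa, hsb, h4, rfl⟩, hcard, hle⟩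
    obtain ⟨⟨D, hD⟩, -⟩ := biquad_disc hsa hsb h4
    set m := Int.lcm a b with hm
    have hm0 : m ≠ 0 := Int.lcm_ne_zero hsa.ne_zero hsb.ne_zero
    have hd0 : absDisc (biquad a b) ≠ 0 := by
      intro h0; rw [h0] at hcard; simp at hcard
    have hD0 : D ≠ 0 := by
      rintro rfl
      simp at hD; exact hd0 hD
    have hoddm : Odd m := by
      have : m ∣ a.natAbs * b.natAbs := by
        rw [hm, Int.lcm_eq_natAbs_lcm_natAbs]; exact Nat.lcm_dvd_mul _ _
      exact Odd.of_dvd_nat (Odd.mul (Int.natAbs_odd.2 hoa) (Int.natAbs_odd.2 hob)) this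
    simp only [T, Finset.coe_biUnion, Set.mem_iUnion, Finset.mem_coe]
    refine ⟨m, ?_, ?_⟩
    · simp only [M, Finset.mem_filter, Finset.mem_Icc]
      refine ⟨⟨Nat.pos_of_ne_zero hm0, ?_⟩, ?_⟩
      · apply Nat.le_floor
        have h1 : (m : ℝ) ^ 2 ≤ 256 * X := by
          have h2 : m ^ 2 ≤ 256 * absDisc (biquad a b) := by
            rw [← hD]; exact Nat.le_mul_of_pos_left _ (by positivity)
          have h3 : (m : ℝ) ^ 2 ≤ 256 * absDisc (biquad a b) := by exact_mod_cast h2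
          linarith
        have : (m : ℝ) ^ 2 ≤ (16 * √X) ^ 2 := by
          rw [mul_pow, Real.sq_sqrt hX]; linarith
        exact le_of_sq_le_sq this (by positivity)
      · rw [← hcard]
        apply Finset.card_le_card
        intro p hp
        have hpp := Nat.prime_of_mem_primeFactors hp
        have hpm := Nat.dvd_of_mem_primeFactors hp
        rw [Nat.mem_primeFactors]
        refine ⟨hpp, ?_, hd0⟩
        have h1 : p ∣ 256 * absDisc (biquad a b) := by
          rw [← hD]; exact Dvd.dvd.mul_left (dvd_pow hpm (by norm_num)) _
        rcases (Nat.Prime.dvd_mul hpp).1 h1 with h | h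
        · exfalso
          have h2 : p ∣ 2 := hpp.dvd_of_dvd_pow (show p ∣ 2 ^ 8 by simpa using h)
          have h3 := (Nat.prime_dvd_prime_iff_eq hpp Nat.prime_two).1 h2
          subst h3
          exact (Nat.not_even_iff_odd.2 hoddm) (even_iff_two_dvd.2 hpm)
        · exact h
    · rw [Finset.mem_image]
      refine ⟨(a, b), ?_, rfl⟩
      rw [Finset.mem_product]
      constructor
      · refine mem_Dset hm0 hsa ?_
        rw [hm, Int.lcm_eq_natAbs_lcm_natAbs]; exact Nat.dvd_lcm_left _ _
      · refine mem_Dset hm0 hsb ?_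
        rw [hm, Int.lcm_eq_natAbs_lcm_natAbs]; exact Nat.dvd_lcm_right _ _
  have h1 : countSn n X ≤ T.card := by
    have := Set.ncard_le_ncard hsub T.finite_toSet
    rw [Set.ncard_coe_finset] at this
    exact this
  have h2 : T.card ≤ N * (2 ^ (n + 3)) ^ 2 := by
    refine (Finset.card_biUnion_le_card_mul M _ ((2 ^ (n + 3)) ^ 2) ?_).trans ?_
    · intro m hm
      refine Finset.card_image_le.trans ?_
      rw [Finset.card_product, ← sq]
      refine Nat.pow_le_pow_left ((Dset_card m).trans ?_) 2
      exact Nat.pow_le_pow_right (by norm_num) (by have := (Finset.mem_filter.1 hm).2; omega)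
    · refine Nat.mul_le_mul_right _ ?_
      exact (Finset.card_filter_le _ _).trans (by simp)
  have h3 : (N : ℝ) ≤ 16 * √X := Nat.floor_le (by positivity)
  calc (countSn n X : ℝ) ≤ ((N * (2 ^ (n + 3)) ^ 2 : ℕ) : ℝ) := by exact_mod_cast h1.trans h2
    _ = N * (2 ^ (n + 3)) ^ 2 := by push_cast; ring
    _ ≤ (16 * √X) * (2 ^ (n + 3)) ^ 2 := by gcongr
    _ = _ := by ring

lemma irr_zero {s : ℝ} (hs : Irrational s) (x y : ℚ) (h : (x : ℝ) + y * s = 0) : x = 0 ∧ y = 0 := by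
  have hy : y = 0 := by
    by_contra hy
    have hy' : (y : ℝ) ≠ 0 := by exact_mod_cast hy
    apply hs
    refine ⟨-x / y, ?_⟩
    push_cast
    field_simp
    linarith
  subst hy
  simp at h
  exact ⟨h, rfl⟩

section low
variable {p b : ℕ}

lemma ra_sq (p : ℕ) : ((√(p : ℝ) : ℝ) : ℂ) ^ 2 = ((p : ℤ) : ℂ) := by
  rw [← Complex.ofReal_pow, Real.sq_sqrt (by positivity)]; simp

lemma rb_sq (b : ℕ) : (Complex.I * ((√(b : ℝ) : ℝ) : ℂ)) ^ 2 = ((-(b : ℤ) : ℤ) : ℂ) := by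
  rw [mul_pow, ← Complex.ofReal_pow, Real.sq_sqrt (by positivity)]; simp

lemma low_li (hp : p.Prime) (hb : 0 < b) : LinearIndependent ℚ
    ![(1 : biquad p (-(b : ℤ))), ⟨_, mem_left (ra_sq p)⟩, ⟨_, mem_right (rb_sq b)⟩,
      ⟨_, mem_left (ra_sq p)⟩ * ⟨_, mem_right (rb_sq b)⟩] := by
  rw [Fintype.linearIndependent_iff]
  intro g hg
  have h1 := congrArg (algebraMap (biquad p (-(b : ℤ))) ℂ) hg
  simp only [Fin.sum_univ_four, Algebra.smul_def, map_add, map_mul, map_zero] at h1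
  simp [IntermediateField.algebraMap_apply] at h1
  have hre := congrArg Complex.re h1
  have him := congrArg Complex.im h1
  simp at hre him
  have hb' : √(b : ℝ) ≠ 0 := by positivity
  have h2 := irr_zero hp.irrational_sqrt (g 0) (g 1) (by linarith)
  have h3 := irr_zero hp.irrational_sqrt (g 2) (g 3) (by
    have : √(b : ℝ) * ((g 2 : ℝ) + g 3 * √(p : ℝ)) = 0 := by linarith
    exact (mul_eq_zero.1 this).resolve_left hb')
  intro i
  fin_cases i
  exacts [h2.1, h2.2, h3.1, h3.2]

lemma low_finrank (hp : p.Prime) (hb : 0 < b) : Module.finrank ℚ (biquad p (-(b : ℤ))) = 4 := by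
  have := biquad_fd p (-(b : ℤ))
  apply le_antisymm (biquad_finrank_le _ _)
  simpa using (low_li hp hb).fintype_card_le_finrank

lemma low_rep (hp : p.Prime) (hb : 0 < b) {x : ℂ} (hx : x ∈ biquad p (-(b : ℤ))) :
    ∃ α β γ δ : ℚ, x.re = α + β * √(p : ℝ) ∧ x.im = √(b : ℝ) * (γ + δ * √(p : ℝ)) := by
  have := biquad_fd p (-(b : ℤ))
  let V := basisOfLinearIndependentOfCardEqFinrank (low_li hp hb) (by simp [low_finrank hp hb])
  have hV := coe_basisOfLinearIndependentOfCardEqFinrank (low_li hp hb) (by simp [low_finrank hp hb])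
  have h0 := V.sum_repr ⟨x, hx⟩
  rw [hV] at h0
  set g := V.repr ⟨x, hx⟩ with hg
  have h1 := congrArg (algebraMap (biquad p (-(b : ℤ))) ℂ) h0
  simp only [Fin.sum_univ_four, Algebra.smul_def, map_add, map_mul, map_zero] at h1
  simp [IntermediateField.algebraMap_apply] at h1
  have hre := congrArg Complex.re h1
  have him := congrArg Complex.im h1
  simp at hre him
  exact ⟨g 0, g 1, g 2, g 3, by linarith, by linarith⟩

lemma low_p {p' b' : ℕ} (hp : p.Prime) (hp' : p'.Prime) (hb : 0 < b)
    (h : biquad p' (-(b' : ℤ)) = biquad p (-(b : ℤ))) : p' = p := by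
  obtain ⟨α, β, γ, δ, h1, -⟩ := low_rep hp hb (h ▸ mem_left (ra_sq p'))
  rw [Complex.ofReal_re] at h1
  have h2 : ((α ^ 2 + β ^ 2 * p - p' : ℚ) : ℝ) + ((2 * α * β : ℚ) : ℝ) * √(p : ℝ) = 0 := by
    have e1 := Real.sq_sqrt (Nat.cast_nonneg (α := ℝ) p)
    have e2 := Real.sq_sqrt (Nat.cast_nonneg (α := ℝ) p')
    rw [h1] at e2
    push_cast
    linear_combination e2 - (β : ℝ) ^ 2 * e1
  obtain ⟨h3, h4⟩ := irr_zero hp.irrational_sqrt _ _ h2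
  have h5 : β ≠ 0 := by
    rintro rfl
    apply hp'.irrational_sqrt
    exact ⟨α, by rw [h1]; simp⟩
  have h6 : α = 0 := by simpa [h5] using h4
  subst h6
  have h7 : β ^ 2 * ((p : ℤ) : ℚ) = ((p' : ℤ) : ℚ) := by push_cast; linarith
  obtain ⟨k, rfl⟩ := rat_int_of_sq β p p' (Int.squarefree_natCast.2 hp.prime.squarefree) h7
  have h8 : k ^ 2 * (p : ℤ) = p' := by exact_mod_cast h7
  have h9 : (p : ℤ) ∣ p' := Dvd.intro_left _ h8
  exact ((Nat.prime_dvd_prime_iff_eq hp hp').1 (by exact_mod_cast h9)).symm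

lemma low_b {b' : ℕ} (hp : p.Prime) (hb : 0 < b) (hsb : Squarefree b)
    (hpb : ¬ p ∣ b) (hpb' : ¬ p ∣ b')
    (h : biquad p (-(b' : ℤ)) = biquad p (-(b : ℤ))) : b ∣ b' := by
  obtain ⟨α, β, γ, δ, -, h1⟩ := low_rep hp hb (h ▸ mem_right (rb_sq b'))
  have h1 : √(b' : ℝ) = √(b : ℝ) * (γ + δ * √(p : ℝ)) := by simpa using h1
  have h2 : ((b * γ ^ 2 + b * δ ^ 2 * p - b' : ℚ) : ℝ) + ((2 * b * γ * δ : ℚ) : ℝ) * √(p : ℝ) = 0 := by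
    have e1 := Real.sq_sqrt (Nat.cast_nonneg (α := ℝ) p)
    have e2 := Real.sq_sqrt (Nat.cast_nonneg (α := ℝ) b')
    have e3 := Real.sq_sqrt (Nat.cast_nonneg (α := ℝ) b)
    rw [h1] at e2
    push_cast
    linear_combination e2 - (b : ℝ) * (δ : ℝ) ^ 2 * e1 - (γ + δ * √(p : ℝ)) ^ 2 * e3
  obtain ⟨h3, h4⟩ := irr_zero hp.irrational_sqrt _ _ h2
  have hb0 : (b : ℚ) ≠ 0 := by positivity
  have h5 : γ = 0 ∨ δ = 0 := by simpa [hb.ne'] using h4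
  rcases h5 with rfl | rfl
  · exfalso
    have h7 : δ ^ 2 * ((b * p : ℤ) : ℚ) = ((b' : ℤ) : ℚ) := by push_cast; linarith
    have hsq : Squarefree ((b : ℤ) * p) := by
      have : Squarefree (b * p) := (Nat.squarefree_mul ((Nat.coprime_comm.1 ((Nat.Prime.coprime_iff_not_dvd hp).2 hpb)))).2
        ⟨hsb, hp.prime.squarefree⟩
      exact_mod_cast Int.squarefree_natCast.2 this
    obtain ⟨k, rfl⟩ := rat_int_of_sq δ _ b' hsq h7
    have h8 : k ^ 2 * ((b : ℤ) * p) = b' := by exact_mod_cast h7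
    have h9 : (p : ℤ) ∣ b' := ⟨k ^ 2 * b, by rw [← h8]; ring⟩
    exact hpb' (by exact_mod_cast h9)
  · have h7 : γ ^ 2 * ((b : ℤ) : ℚ) = ((b' : ℤ) : ℚ) := by push_cast; linarith
    obtain ⟨k, rfl⟩ := rat_int_of_sq γ _ b' (Int.squarefree_natCast.2 hsb) h7
    have h8 : k ^ 2 * (b : ℤ) = b' := by exact_mod_cast h7
    have h9 : (b : ℤ) ∣ b' := Dvd.intro_left _ h8
    exact_mod_cast h9
end low

lemma family_finite (X : ℝ) :
    {K : IntermediateField ℚ ℂ | K ∈ biquadFamily ∧ (absDisc K : ℝ) ≤ X}.Finite := by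
  have h := NumberField.finite_of_discr_bdd ℂ ⌊X⌋₊
  refine (h.image Subtype.val).subset ?_
  rintro K ⟨⟨a, b, -, -, -, -, -, rfl⟩, hX⟩
  have hfd := biquad_fd a b
  refine ⟨⟨biquad a b, hfd⟩, ?_, rfl⟩
  have : absDisc (biquad a b) ≤ ⌊X⌋₊ := Nat.le_floor hX
  simp only [absDisc, hfd, dite_true] at this
  simp only [Set.mem_setOf_eq]
  rw [Int.abs_eq_natAbs]
  exact_mod_cast this

def Bset (p Z : ℕ) : Finset ℕ := (Finset.Ioc 0 Z).filter (fun b => Odd b ∧ Squarefree b ∧ ¬ p ∣ b)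

lemma sum_sq_le (n : ℕ) : ∑ k ∈ Finset.Icc 1 n, (1 : ℝ) / ((2 * k + 1) ^ 2 : ℕ) ≤ 1 / 4 - 1 / (4 * (n + 1)) := by
  induction n with
  | zero => simp
  | succ n ih =>
    rw [Finset.sum_Icc_succ_top (by omega)]
    have : (1 : ℝ) / ((2 * (n + 1) + 1) ^ 2 : ℕ) ≤ 1 / (4 * (n + 1)) - 1 / (4 * (n + 1 + 1)) := by
      push_cast
      rw [div_sub_div _ _ (by positivity) (by positivity), div_le_div_iff₀ (by positivity) (by positivity)]
      nlinarith [(Nat.cast_nonneg n : (0 : ℝ) ≤ n)]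
    push_cast at this ih ⊢
    linarith

lemma Bset_card {p : ℕ} (hp : 5 ≤ p) (Z : ℕ) : (Z : ℝ) / 20 ≤ (Bset p Z).card := by
  have hsub : Finset.Ioc 0 Z ⊆ Bset p Z ∪ ((Finset.Ioc 0 Z).filter (fun b => 2 ∣ b) ∪
      ((Finset.Ioc 0 Z).filter (fun b => p ∣ b) ∪
      (Finset.Icc 1 Z).biUnion (fun k => (Finset.Ioc 0 Z).filter (fun b => (2 * k + 1) ^ 2 ∣ b)))) := by
    intro b hb
    simp only [Finset.mem_union, Finset.mem_filter, Finset.mem_biUnion, Bset, hb, true_and]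
    by_cases h1 : 2 ∣ b
    · tauto
    by_cases h2 : p ∣ b
    · tauto
    by_cases h3 : Squarefree b
    · left
      exact ⟨Nat.not_even_iff_odd.1 (fun h => h1 (even_iff_two_dvd.1 h)), h3, h2⟩
    right; right; right
    rw [Nat.squarefree_iff_prime_squarefree] at h3
    push Not at h3
    obtain ⟨q, hq, hqb⟩ := h3
    have hq2 : ¬ 2 ∣ q := fun h => h1 ((h.mul_right q).trans hqb)
    rw [Finset.mem_Ioc] at hb
    have := Nat.le_of_dvd hb.1 hqb
    have hq1 := hq.two_le
    refine ⟨q / 2, ?_, ?_⟩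
    · rw [Finset.mem_Icc]
      constructor
      · omega
      · have : q ≤ q * q := Nat.le_mul_self q
        omega
    · have : 2 * (q / 2) + 1 = q := by omega
      rwa [this, sq]
  have h1 := (Finset.card_le_card hsub).trans ((Finset.card_union_le _ _).trans (Nat.add_le_add_left
    ((Finset.card_union_le _ _).trans (Nat.add_le_add_left ((Finset.card_union_le _ _).trans
      (Nat.add_le_add_left Finset.card_biUnion_le _)) _)) _))
  simp only [Nat.Ioc_filter_dvd_card_eq_div, Nat.card_Ioc] at h1
  have h2 : (Z : ℝ) ≤ (Bset p Z).card + (((Z / 2 : ℕ) : ℝ) + (((Z / p : ℕ) : ℝ) +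
      ∑ k ∈ Finset.Icc 1 Z, ((Z / (2 * k + 1) ^ 2 : ℕ) : ℝ))) := by
    have : Z ≤ (Bset p Z).card + ((Z / 2) + ((Z / p) + ∑ k ∈ Finset.Icc 1 Z, (Z / (2 * k + 1) ^ 2))) := by
      simpa using h1
    exact_mod_cast this
  have h3 : ((Z / 2 : ℕ) : ℝ) ≤ Z / 2 := by exact_mod_cast Nat.cast_div_le (α := ℝ) (m := Z) (n := 2)
  have h4 : ((Z / p : ℕ) : ℝ) ≤ Z / 5 := by
    refine (Nat.cast_div_le (α := ℝ)).trans ?_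
    have : (5 : ℝ) ≤ p := by exact_mod_cast hp
    gcongr
  have h5 : ∑ k ∈ Finset.Icc 1 Z, ((Z / (2 * k + 1) ^ 2 : ℕ) : ℝ) ≤ Z * (1 / 4) := by
    have h6 := sum_sq_le Z
    have h7 : (0 : ℝ) ≤ 1 / (4 * (Z + 1)) := by positivity
    calc ∑ k ∈ Finset.Icc 1 Z, ((Z / (2 * k + 1) ^ 2 : ℕ) : ℝ)
        ≤ ∑ k ∈ Finset.Icc 1 Z, (Z : ℝ) * ((1 : ℝ) / ((2 * k + 1) ^ 2 : ℕ)) := by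
          refine Finset.sum_le_sum fun k _ => ?_
          refine (Nat.cast_div_le (α := ℝ)).trans ?_
          rw [mul_one_div]
      _ = Z * ∑ k ∈ Finset.Icc 1 Z, ((1 : ℝ) / ((2 * k + 1) ^ 2 : ℕ)) := by rw [Finset.mul_sum]
      _ ≤ Z * (1 / 4) := by gcongr; linarith
  linarith

lemma primes_sum (A : ℝ) : ∃ P : Finset ℕ, (∀ p ∈ P, p.Prime ∧ 5 ≤ p) ∧ A ≤ ∑ p ∈ P, (1 : ℝ) / p := by
  by_contra hcon
  push Not at hcon
  apply not_summable_one_div_on_primes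
  set f := Set.indicator {p : ℕ | p.Prime} (fun n : ℕ ↦ (1 : ℝ) / n) with hf
  have hf0 : ∀ n, 0 ≤ f n := fun n => Set.indicator_nonneg (fun _ _ => by positivity) n
  refine summable_of_sum_le (c := ∑ n ∈ Finset.range 5, f n + A) hf0 ?_
  intro u
  rw [← Finset.sum_filter_add_sum_filter_not u (fun n => n < 5)]
  refine add_le_add ?_ ?_
  · refine Finset.sum_le_sum_of_subset_of_nonneg ?_ (fun n _ _ => hf0 n)
    intro n hn
    simpa using (Finset.mem_filter.1 hn).2
  · have h1 := hcon ((u.filter (fun n => ¬ n < 5)).filter Nat.Prime) (by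
      intro p hp
      simp only [Finset.mem_filter] at hp
      exact ⟨hp.2, by omega⟩)
    rw [Finset.sum_filter] at h1
    refine le_trans (le_of_eq ?_) h1.le
    refine Finset.sum_congr rfl fun n _ => ?_
    simp [hf, Set.indicator_apply]

lemma countS_ge (P : Finset ℕ) (hP : ∀ p ∈ P, p.Prime ∧ 5 ≤ p) (X : ℝ) (hX : 0 ≤ X) :
    √X / 320 * ∑ p ∈ P, (1 : ℝ) / p - P.card ≤ countS X := by
  set Y := √X / 16 with hY
  have hY0 : 0 ≤ Y := by positivity
  let S : Finset (Σ _ : ℕ, ℕ) := P.sigma (fun p => Bset p ⌊Y / p⌋₊)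
  have hmem : ∀ s ∈ S, s.1.Prime ∧ 5 ≤ s.1 ∧ 0 < s.2 ∧ (s.2 : ℝ) ≤ Y / s.1 ∧ Odd s.2 ∧
      Squarefree s.2 ∧ ¬ s.1 ∣ s.2 := by
    intro s hs
    simp only [S, Finset.mem_sigma, Bset, Finset.mem_filter, Finset.mem_Ioc] at hs
    obtain ⟨h1, ⟨h2, h3⟩, h4, h5, h6⟩ := hs
    refine ⟨(hP _ h1).1, (hP _ h1).2, h2, ?_, h4, h5, h6⟩
    exact (Nat.le_floor_iff (by positivity)).1 h3
  have hcard : S.card ≤ countS X := by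
    have hmaps : ∀ s ∈ (S : Set (Σ _ : ℕ, ℕ)), biquad s.1 (-(s.2 : ℤ)) ∈
        {K : IntermediateField ℚ ℂ | K ∈ biquadFamily ∧ (absDisc K : ℝ) ≤ X} := by
      intro s hs
      obtain ⟨h1, h2, h3, h4, h5, h6, h7⟩ := hmem s hs
      have hfr := low_finrank h1 h3
      have hsp : Squarefree (s.1 : ℤ) := Int.squarefree_natCast.2 h1.prime.squarefree
      have hsb : Squarefree (-(s.2 : ℤ)) := by
        rw [← Int.squarefree_natAbs]; simpa using h6
      refine ⟨⟨s.1, -(s.2 : ℤ), ?_, ?_, hsp, hsb, hfr, rfl⟩, ?_⟩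
      · exact_mod_cast h1.odd_of_ne_two (by omega)
      · rw [odd_neg]; exact_mod_cast h5
      · have h8 := (biquad_disc hsp hsb hfr).2
        have h9 : Int.lcm (s.1 : ℤ) (-(s.2 : ℤ)) ≤ s.1 * s.2 := by
          rw [Int.lcm_eq_natAbs_lcm_natAbs]
          simp only [Int.natAbs_natCast, Int.natAbs_neg]
          exact Nat.le_of_dvd (Nat.mul_pos h1.pos h3) (Nat.lcm_dvd_mul _ _)
        have h10 : absDisc (biquad s.1 (-(s.2 : ℤ))) ≤ 256 * (s.1 * s.2) ^ 2 :=
          h8.trans (by gcongr)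
        have h11 : (absDisc (biquad s.1 (-(s.2 : ℤ))) : ℝ) ≤ 256 * (s.1 * s.2) ^ 2 := by
          exact_mod_cast h10
        have hs1 : (0 : ℝ) < s.1 := by exact_mod_cast h1.pos
        have h12 : (s.1 * s.2 : ℝ) ≤ Y := by
          rw [le_div_iff₀ hs1] at h4; linarith
        have h13 : (s.1 * s.2 : ℝ) ^ 2 ≤ Y ^ 2 := by gcongr
        have h14 : Y ^ 2 = X / 256 := by rw [hY, div_pow, Real.sq_sqrt hX]; norm_num
        linarith
    have hinj : Set.InjOn (fun s : (Σ _ : ℕ, ℕ) => biquad s.1 (-(s.2 : ℤ))) (S : Set (Σ _ : ℕ, ℕ)) := by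
      rintro ⟨p, b⟩ hs ⟨p', b'⟩ hs' heq
      obtain ⟨h1, h2, h3, h4, h5, h6, h7⟩ := hmem _ hs
      obtain ⟨h1', h2', h3', h4', h5', h6', h7'⟩ := hmem _ hs'
      simp only at *
      have := low_p h1' h1 h3' heq
      subst this
      have e1 := low_b h1 h3' h6' h7' h7 heq
      have e2 := low_b h1 h3 h6 h7 h7' heq.symm
      rw [Nat.dvd_antisymm e2 e1]
    have := Set.ncard_le_ncard_of_injOn _ hmaps hinj (family_finite X)
    rw [Set.ncard_coe_finset] at this
    exact this
  have h1 : (S.card : ℝ) = ∑ p ∈ P, ((Bset p ⌊Y / p⌋₊).card : ℝ) := by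
    simp [S, Finset.card_sigma]
  have h2 : ∑ p ∈ P, (√X / 320 * (1 / p) - 1) ≤ ∑ p ∈ P, ((Bset p ⌊Y / p⌋₊).card : ℝ) := by
    refine Finset.sum_le_sum fun p hp => ?_
    refine le_trans ?_ (Bset_card (hP p hp).2 _)
    have := Nat.lt_floor_add_one (Y / p)
    have e : √X / 320 * (1 / p) = Y / p / 20 := by rw [hY]; ring
    rw [e]
    linarith
  rw [Finset.sum_sub_distrib, ← Finset.mul_sum] at h2
  simp only [Finset.sum_const, nsmul_eq_mul, mul_one] at h2
  have h3 : (S.card : ℝ) ≤ countS X := by exact_mod_cast hcard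
  linarith

theorem stmt18 (n : ℕ) (hn : 1 ≤ n) :
    Tendsto (fun X : ℝ => (countSn n X : ℝ) / (countS X : ℝ)) atTop (nhds 0) := by
  rw [Metric.tendsto_atTop]
  intro ε hε
  set C : ℝ := 16 * (2 ^ (n + 3)) ^ 2 with hC
  have hC0 : 0 < C := by positivity
  obtain ⟨P, hP, hA⟩ := primes_sum (320 * (C / ε + 1))
  refine ⟨((P.card : ℝ) + 1) ^ 2, fun X hX => ?_⟩
  have hX0 : 0 ≤ X := le_trans (by positivity) hX
  have h1 := countSn_le n X hX0
  have h2 := countS_ge P hP X hX0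
  have h3 : (P.card : ℝ) + 1 ≤ √X := Real.le_sqrt_of_sq_le hX
  have h4 : √X / 320 * (320 * (C / ε + 1)) ≤ √X / 320 * ∑ p ∈ P, (1 : ℝ) / p := by gcongr
  have h5 : √X / 320 * (320 * (C / ε + 1)) = C * √X / ε + √X := by field_simp
  have h6 : C * √X / ε < countS X := by linarith
  have h7 : (0 : ℝ) < countS X := lt_of_le_of_lt (by positivity) h6
  rw [Real.dist_eq, sub_zero, abs_of_nonneg (by positivity), div_lt_iff₀ h7]
  rw [div_lt_iff₀ hε] at h6
  rw [← hC] at h1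
  linarith
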